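/- Let N = 3 and let ω ∈ ℂ be a primitive cube root of unity. Suppose (q_{ij})_{i,j ∈ ℤ/3ℤ} satisfies the anyonic permutation relations in A and, in addition, the braided commutation relations q_{ij} q_{kl} = ω^{kj - il} q_{kl} q_{ij} for all i,j,k,l ∈ ℤ/3ℤ. Then all the elements q_{ij} pairwise commute: q_{ij} q_{kl} = q_{kl} q_{ij} for all i,j,k,l ∈ ℤ/3ℤ. -/

import Mathlib

noncomputable section

/-- `ω ^ m` for `m ∈ ℤ/Nℤ`; this is well defined (independent of the chosen
representative) as soon as `ω ^ N = 1`. -/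
def wpow (N : ℕ) (ω : ℂ) (m : ZMod N) : ℂ := ω ^ m.val

/-- `z ^ m` for `m ∈ ℤ/Nℤ`; well defined when `z ^ N = 1`. -/
def apow {A : Type*} [Monoid A] (N : ℕ) (z : A) (m : ZMod N) : A := z ^ m.val

/-- The anyonic permutation relations for a family `(q i j)` indexed by `ℤ/Nℤ × ℤ/Nℤ`. -/
def AnyonicPermRel (N : ℕ) [NeZero N] (ω : ℂ) {A : Type*} [Ring A] [StarRing A]
    [Algebra ℂ A] (q : ZMod N → ZMod N → A) : Prop :=
  (∀ i : ZMod N, q 0 i = if i = 0 then 1 else 0) ∧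
  (∀ i : ZMod N, q i 0 = if i = 0 then 1 else 0) ∧
  (∀ i j : ZMod N, star (q i j) = wpow N ω (-(i * (i - j))) • q (-i) (-j)) ∧
  (∀ i j k : ZMod N, q k (i + j) =
    ∑ l : ZMod N, wpow N ω (-(l * (i - k + l))) • (q (k - l) i * q l j)) ∧
  (∀ i j k : ZMod N, q (i + j) k =
    ∑ l : ZMod N, wpow N ω (-(i * (l - j))) • (q j l * q i (k - l)))

/-- The untwisted relations for a family `(a i j)` indexed by `ℤ/Nℤ × ℤ/Nℤ`. -/
def UntwistedRel (N : ℕ) [NeZero N] {A : Type*} [Ring A] [StarRing A]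
    (a : ZMod N → ZMod N → A) : Prop :=
  (∀ i : ZMod N, a i 0 = if i = 0 then 1 else 0) ∧
  (∀ i j : ZMod N, star (a i j) = a (-i) (-j)) ∧
  (∀ i j k : ZMod N, ∑ l : ZMod N, a (k - l) i * a l j = a k (i + j)) ∧
  (∀ i j k : ZMod N, ∑ l : ZMod N, a j l * a i (k - l) = a (i + j) k)

/-- A matrix `(m i j)` over a unital `*`-algebra is unitary. -/
def IsUnitaryMatrix (N : ℕ) [NeZero N] {A : Type*} [Ring A] [StarRing A]
    (m : ZMod N → ZMod N → A) : Prop :=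
  (∀ i j : ZMod N, ∑ k : ZMod N, star (m k i) * m k j = if i = j then 1 else 0) ∧
  (∀ i j : ZMod N, ∑ k : ZMod N, m i k * star (m j k) = if i = j then 1 else 0)

/-- The twisted conjugate matrix `ū_R` with entries `ω^{-i(j-i)} u_{ij}*`. -/
def conjR (N : ℕ) (ω : ℂ) {A : Type*} [Ring A] [StarRing A] [Algebra ℂ A]
    (u : ZMod N → ZMod N → A) : ZMod N → ZMod N → A :=
  fun i j => wpow N ω (-(i * (j - i))) • star (u i j)

/-- A magic unitary: entries are projections and all rows and columns sum to `1`. -/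
def IsMagicUnitary (N : ℕ) [NeZero N] {A : Type*} [Ring A] [StarRing A]
    (u : ZMod N → ZMod N → A) : Prop :=
  (∀ i j : ZMod N, u i j * u i j = u i j) ∧
  (∀ i j : ZMod N, star (u i j) = u i j) ∧
  (∀ j : ZMod N, ∑ i : ZMod N, u i j = 1) ∧
  (∀ i : ZMod N, ∑ j : ZMod N, u i j = 1)

/-! At `k = 0` and `j = i`, relations (3) and (4) write `q 0 (i + i)` and `q (i + i) 0` as sums
over `l` whose summands, by the braided commutation relations, take the same value at `l` and `-l`.
For `N = 3` and `i ≠ 0` this reads `0 = 2 • (summand at 1)`, so `q (-l) i * q l i` and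
`q i l * q i (-l)` vanish. These are the only products of entries with nonzero indices whose
braiding factor `ω ^ (k * j - i * l)` is not trivially `1`. -/

section Relations

variable {R A : Type*} [CommSemiring R] [Semiring A] [Algebra R A]

/-- The `*`-free part, (1), (3) and (4), of the anyonic permutation relations, with `ω` in any
commutative coefficient semiring. -/
structure AnyonicProductRel (N : ℕ) [NeZero N] (ω : R) (q : ZMod N → ZMod N → A) : Prop where
  zero_left : ∀ i, q 0 i = if i = 0 then 1 else 0
  zero_right : ∀ i, q i 0 = if i = 0 then 1 else 0
  add_right : ∀ i j k, q k (i + j) =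
    ∑ l, apow N ω (-(l * (i - k + l))) • (q (k - l) i * q l j)
  add_left : ∀ i j k, q (i + j) k =
    ∑ l, apow N ω (-(i * (l - j))) • (q j l * q i (k - l))

/-- The braided commutation relations `q_{ij} q_{kl} = ω^{kj - il} q_{kl} q_{ij}`. -/
def BraidedCommRel (N : ℕ) (ω : R) (q : ZMod N → ZMod N → A) : Prop :=
  ∀ i j k l, q i j * q k l = apow N ω (k * j - i * l) • (q k l * q i j)

end Relations

theorem AnyonicPermRel.anyonicProductRel {N : ℕ} [NeZero N] {ω : ℂ} {A : Type*} [Ring A]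
    [StarRing A] [Algebra ℂ A] {q : ZMod N → ZMod N → A} (hq : AnyonicPermRel N ω q) :
    AnyonicProductRel N ω q :=
  let ⟨zero_left, zero_right, _, add_right, add_left⟩ := hq
  ⟨zero_left, zero_right, add_right, add_left⟩

section Powers

variable {M : Type*} [Monoid M] {N : ℕ} {z : M}

theorem apow_zero (N : ℕ) (z : M) : apow N z 0 = 1 := by
  rw [apow, ZMod.val_zero, pow_zero]

theorem apow_add [NeZero N] (hz : z ^ N = 1) (a b : ZMod N) :
    apow N z (a + b) = apow N z a * apow N z b := by
  rw [apow, ZMod.val_add, ← pow_eq_pow_mod _ hz, pow_add, apow, apow]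

theorem isUnit_apow [NeZero N] (hz : z ^ N = 1) (a : ZMod N) : IsUnit (apow N z a) :=
  (IsUnit.of_pow_eq_one hz (NeZero.ne N)).pow a.val

end Powers

section Braiding

variable {R A : Type*} [CommSemiring R] [Semiring A] [Algebra R A] {N : ℕ} [NeZero N] {ω : R}
  {q : ZMod N → ZMod N → A}

theorem AnyonicProductRel.commute_zero_left (hq : AnyonicProductRel N ω q)
    (i : ZMod N) (x : A) : Commute (q 0 i) x := by
  rw [hq.zero_left]
  split_ifs
  exacts [Commute.one_left x, Commute.zero_left x]

theorem AnyonicProductRel.commute_zero_right (hq : AnyonicProductRel N ω q)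
    (i : ZMod N) (x : A) : Commute (q i 0) x := by
  rw [hq.zero_right]
  split_ifs
  exacts [Commute.one_left x, Commute.zero_left x]

theorem BraidedCommRel.even_column_summand (hω : ω ^ N = 1)
    (hbr : BraidedCommRel N ω q) (j : ZMod N) :
    Function.Even fun l ↦ apow N ω (-(l * (j + l))) • (q (-l) j * q l j) := by
  intro l
  dsimp only
  rw [neg_neg, hbr l j, smul_smul, ← apow_add hω]
  congr 2
  ring

theorem BraidedCommRel.even_row_summand (hω : ω ^ N = 1)
    (hbr : BraidedCommRel N ω q) (i : ZMod N) :
    Function.Even fun l ↦ apow N ω (-(i * (l - i))) • (q i l * q i (-l)) := by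
  intro l
  dsimp only
  rw [neg_neg, hbr i (-l), smul_smul, ← apow_add hω]
  congr 2
  ring

end Braiding

theorem zmod_three_eq_neg_of_mul_ne_mul : ∀ {i j k l : ZMod 3}, i ≠ 0 → j ≠ 0 → k ≠ 0 → l ≠ 0 →
    k * j ≠ i * l → (k = -i ∧ l = j) ∨ (k = i ∧ l = -j) := by
  decide

theorem eq_zero_of_even_of_sum_zmod_three_eq_zero {R M : Type*} [Semiring R] [AddCommMonoid M]
    [Module R M] (h2 : IsSMulRegular M (2 : R)) {f : ZMod 3 → M} (hf : Function.Even f)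
    (h0 : f 0 = 0) (hsum : ∑ l, f l = 0) (l : ZMod 3) : f l = 0 := by
  have hneg : f 2 = f 1 := hf 1
  have h1 : f 1 = 0 := by
    refine h2.right_eq_zero_of_smul ?_
    calc (2 : R) • f 1 = f 0 + f 1 + f 2 := by rw [two_smul, hneg, h0, zero_add]
      _ = ∑ l, f l := (Fin.sum_univ_three f).symm
      _ = 0 := hsum
  fin_cases l
  exacts [h0, h1, hneg.trans h1]

section OrderThree

variable {R A : Type*} [CommSemiring R] [Semiring A] [Algebra R A] {ω : R}
  {q : ZMod 3 → ZMod 3 → A}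

theorem AnyonicProductRel.column_mul_eq_zero (h2 : IsSMulRegular A (2 : R)) (hω : ω ^ 3 = 1)
    (hq : AnyonicProductRel 3 ω q) (hbr : BraidedCommRel 3 ω q) {j : ZMod 3} (hj : j ≠ 0)
    (l : ZMod 3) : q (-l) j * q l j = 0 := by
  have hadd : j + j ≠ 0 := mt (ZMod.add_self_eq_zero_iff_eq_zero (by decide)).1 hj
  have hsum : ∑ l, apow 3 ω (-(l * (j + l))) • (q (-l) j * q l j) = 0 := by
    simpa only [hq.zero_left, if_neg hadd, sub_zero, zero_sub] using
      (hq.add_right j j 0).symm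
  have h0 : apow 3 ω (-(0 * (j + 0))) • (q (-0) j * q 0 j) = 0 := by
    rw [hq.zero_left, if_neg hj, mul_zero, smul_zero]
  exact ((isUnit_apow hω _).isSMulRegular A).right_eq_zero_of_smul <|
    eq_zero_of_even_of_sum_zmod_three_eq_zero h2 (hbr.even_column_summand hω j) h0 hsum l

theorem AnyonicProductRel.row_mul_eq_zero (h2 : IsSMulRegular A (2 : R)) (hω : ω ^ 3 = 1)
    (hq : AnyonicProductRel 3 ω q) (hbr : BraidedCommRel 3 ω q) {i : ZMod 3} (hi : i ≠ 0)
    (l : ZMod 3) : q i l * q i (-l) = 0 := by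
  have hadd : i + i ≠ 0 := mt (ZMod.add_self_eq_zero_iff_eq_zero (by decide)).1 hi
  have hsum : ∑ l, apow 3 ω (-(i * (l - i))) • (q i l * q i (-l)) = 0 := by
    simpa only [hq.zero_right, if_neg hadd, zero_sub] using
      (hq.add_left i i 0).symm
  have h0 : apow 3 ω (-(i * (0 - i))) • (q i 0 * q i (-0)) = 0 := by
    rw [hq.zero_right, if_neg hi, zero_mul, smul_zero]
  exact ((isUnit_apow hω _).isSMulRegular A).right_eq_zero_of_smul <|
    eq_zero_of_even_of_sum_zmod_three_eq_zero h2 (hbr.even_row_summand hω i) h0 hsum l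

theorem stmt_17_general (h2 : IsSMulRegular A (2 : R)) (hω : ω ^ 3 = 1)
    (hq : AnyonicProductRel 3 ω q) (hbr : BraidedCommRel 3 ω q) (i j k l : ZMod 3) :
    q i j * q k l = q k l * q i j := by
  obtain rfl | hi := eq_or_ne i 0
  · exact hq.commute_zero_left j (q k l)
  obtain rfl | hj := eq_or_ne j 0
  · exact hq.commute_zero_right i (q k l)
  obtain rfl | hk := eq_or_ne k 0
  · exact (hq.commute_zero_left l (q i j)).symm
  obtain rfl | hl := eq_or_ne l 0
  · exact (hq.commute_zero_right k (q i j)).symm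
  by_cases hdet : k * j = i * l
  · rw [hbr, sub_eq_zero.2 hdet, apow_zero, one_smul]
  obtain ⟨hki, hlj⟩ | ⟨hki, hlj⟩ := zmod_three_eq_neg_of_mul_ne_mul hi hj hk hl hdet
  · have hcol := hq.column_mul_eq_zero h2 hω hbr hj
    have hcol_neg : q i j * q (-i) j = 0 := by simpa only [neg_neg] using hcol (-i)
    rw [hki, hlj, hcol_neg, hcol i]
  · have hrow := hq.row_mul_eq_zero h2 hω hbr hi
    have hrow_neg : q i (-j) * q i j = 0 := by simpa only [neg_neg] using hrow (-j)
    rw [hki, hlj, hrow j, hrow_neg]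

end OrderThree

theorem stmt_17 (ω : ℂ) (hω : IsPrimitiveRoot ω 3)
    {A : Type*} [NormedRing A] [StarRing A] [CStarRing A]
    [NormedAlgebra ℂ A] [CompleteSpace A] [StarModule ℂ A]
    (q : ZMod 3 → ZMod 3 → A) (hq : AnyonicPermRel 3 ω q)
    (hbr : ∀ i j k l : ZMod 3,
      q i j * q k l = wpow 3 ω (k * j - i * l) • (q k l * q i j)) :
    ∀ i j k l : ZMod 3, q i j * q k l = q k l * q i j :=
  stmt_17_general (two_ne_zero.isUnit.isSMulRegular A) hω.pow_eq_one
    hq.anyonicProductRel hbr
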